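/- arXiv:1412.2041 — 5 statements merged into one kernel-verified Lean document; each statement's English description precedes it below -/
import Mathlib

section
/- If A ∈ ℝ^{K×K} is a symmetric matrix such that for every index k one has αᵀAα ≥ m for all α ∈ ℝ^K with α_k = 1, where m ≥ 0 is a fixed constant, then αᵀAα ≥ (m/K)‖α‖² for every α ∈ ℝ^K; in particular the smallest eigenvalue of A is at least m/K. -/
/-!
Rescaling `α` by `α k ≠ 0` turns the hypothesis into the homogeneous bound
`m * α k ^ 2 ≤ αᵀAα`. Applied at a coordinate of largest modulus, where
`∑ i, α i ^ 2 ≤ K * α k ^ 2`, it gives the bound on the quadratic form.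
The bound on the eigenvalues is the value of the form at unit eigenvectors.
-/

theorem mul_sq_le_quadform {K : ℕ} {A : Matrix (Fin K) (Fin K) ℝ} {m : ℝ} {k : Fin K}
    (h : ∀ α : Fin K → ℝ, α k = 1 → m ≤ ∑ i, ∑ j, α i * A i j * α j)
    (α : Fin K → ℝ) (hk : α k ≠ 0) :
    m * α k ^ 2 ≤ ∑ i, ∑ j, α i * A i j * α j := by
  have h1 := h (fun i => α i / α k) (div_self hk)
  have h2 : ∑ i, ∑ j, α i / α k * A i j * (α j / α k)
      = (∑ i, ∑ j, α i * A i j * α j) / α k ^ 2 := by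
    simp only [Finset.sum_div]
    refine Finset.sum_congr rfl fun i _ => Finset.sum_congr rfl fun j _ => ?_
    field_simp
  rw [h2, le_div_iff₀ (by positivity)] at h1
  exact h1

/-- If `A` is a symmetric `K×K` real matrix such that for every index `k` one has
`αᵀAα ≥ m` for all `α` with `α k = 1` (where `m ≥ 0`), then `αᵀAα ≥ (m/K)‖α‖²` for
every `α ∈ ℝᴷ`; in particular every eigenvalue of `A` is at least `m/K`. -/
theorem quadform_lower_bound
    (K : ℕ) (hK : 1 ≤ K) (A : Matrix (Fin K) (Fin K) ℝ) (hA : A.IsHermitian)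
    (m : ℝ) (hm : 0 ≤ m)
    (h : ∀ k : Fin K, ∀ α : Fin K → ℝ, α k = 1 → m ≤ ∑ i, ∑ j, α i * A i j * α j) :
    (∀ α : Fin K → ℝ, m / K * (∑ i, α i ^ 2) ≤ ∑ i, ∑ j, α i * A i j * α j)
      ∧ ∀ i : Fin K, m / K ≤ hA.eigenvalues i := by
  have hK0 : (0 : ℝ) < K := by exact_mod_cast hK
  have main : ∀ α : Fin K → ℝ,
      m / K * (∑ i, α i ^ 2) ≤ ∑ i, ∑ j, α i * A i j * α j := by
    intro α
    obtain ⟨k, -, hmax⟩ := Finset.exists_max_image Finset.univ (fun i => α i ^ 2)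
      ⟨(⟨0, hK⟩ : Fin K), Finset.mem_univ _⟩
    by_cases hk : α k = 0
    · have h0 : ∀ i, α i = 0 := fun i => by
        have := hmax i (Finset.mem_univ i)
        simp only [hk] at this
        nlinarith
      simp [h0]
    · have hsum : ∑ i, α i ^ 2 ≤ K * α k ^ 2 := by
        simpa using Finset.sum_le_card_nsmul Finset.univ (fun i => α i ^ 2) (α k ^ 2) hmax
      calc m / K * (∑ i, α i ^ 2) ≤ m / K * (K * α k ^ 2) := by gcongr
        _ = m * α k ^ 2 := by field_simp
        _ ≤ _ := mul_sq_le_quadform (h k) α hk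
  refine ⟨main, fun i => ?_⟩
  have hnorm : ∑ j, hA.eigenvectorBasis i j ^ 2 = 1 := by
    rw [← EuclideanSpace.real_norm_sq_eq, hA.eigenvectorBasis.orthonormal.1 i, one_pow]
  have hform : ∑ a, ∑ b, hA.eigenvectorBasis i a * A a b * hA.eigenvectorBasis i b
      = hA.eigenvalues i := by
    have hev : ∀ a, ∑ b, A a b * hA.eigenvectorBasis i b
        = hA.eigenvalues i * hA.eigenvectorBasis i a := fun a => by
      simpa [Matrix.mulVec, dotProduct] using congrFun (hA.mulVec_eigenvectorBasis i) a
    simp_rw [mul_assoc, ← Finset.mul_sum, hev]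
    calc ∑ a, hA.eigenvectorBasis i a * (hA.eigenvalues i * hA.eigenvectorBasis i a)
        = hA.eigenvalues i * ∑ a, hA.eigenvectorBasis i a ^ 2 := by
          rw [Finset.mul_sum]
          exact Finset.sum_congr rfl fun a _ => by ring
      _ = hA.eigenvalues i := by rw [hnorm, mul_one]
  have := main (hA.eigenvectorBasis i)
  rwa [hnorm, hform, mul_one] at this
end

section
/- Under hypotheses (G1), (G2), (G4), for each k one has λ*_k(p) = O(p^{(τ − τ_k)/2}) as p → ∞. (Consequently, the weight assigned to any target whose rate τ_k strictly exceeds τ tends to zero.) -/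
/-!
Since `0 ∈ S`, minimality gives `Δ_p(λ*) ≤ Δ_p(0) = c(p)`, hence `λ*ᵀ A λ* ≤ 2 bᵀ λ*`, and the right
side is at most `2 ∑ₖ |bₖ| = O(p ^ τ)` because every coordinate of `λ*` lies in `[0, 1]`. On the other
hand, homogeneity of the quadratic form gives `(λ*ₖ)² mₖ ≤ λ*ᵀ A λ*` (`sq_mul_sInf_le_quadForm`), and
`mₖ` is at least of order `p ^ τₖ`. Therefore `(λ*ₖ)² = O(p ^ (τ - τₖ))`, and the claim follows on
taking square roots.
-/

open Filter Asymptotics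

theorem quadForm_nonneg {n : ℕ} {M : Matrix (Fin n) (Fin n) ℝ} (hM : M.PosSemidef)
    (v : Fin n → ℝ) : 0 ≤ ∑ i, ∑ j, v i * M i j * v j := by
  have h := hM.dotProduct_mulVec_nonneg v
  simpa [dotProduct, Matrix.mulVec, Finset.mul_sum, mul_assoc] using h

/-- Rescaling a nonnegative vector `v` by `1 / v k` makes it admissible in the infimum over
nonnegative vectors with `k`-th coordinate `1`. -/
theorem sq_mul_sInf_le_quadForm {n : ℕ} {M : Matrix (Fin n) (Fin n) ℝ} (hM : M.PosSemidef)
    (k : Fin n) (v : Fin n → ℝ) (hv : ∀ l, 0 ≤ v l) :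
    v k ^ 2 * sInf {x : ℝ | ∃ α : Fin n → ℝ,
      (∀ l, 0 ≤ α l) ∧ α k = 1 ∧ x = ∑ i, ∑ j, α i * M i j * α j} ≤
      ∑ i, ∑ j, v i * M i j * v j := by
  rcases eq_or_ne (v k) 0 with h0 | h0
  · simpa [h0] using quadForm_nonneg hM v
  · have hle : sInf {x : ℝ | ∃ α : Fin n → ℝ,
        (∀ l, 0 ≤ α l) ∧ α k = 1 ∧ x = ∑ i, ∑ j, α i * M i j * α j} ≤
        ∑ i, ∑ j, (v i / v k) * M i j * (v j / v k) := by
      refine csInf_le ⟨0, ?_⟩ ⟨fun i => v i / v k, fun l => div_nonneg (hv l) (hv k),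
        div_self h0, rfl⟩
      rintro x ⟨α, -, -, rfl⟩
      exact quadForm_nonneg hM α
    refine (mul_le_mul_of_nonneg_left hle (sq_nonneg (v k))).trans_eq ?_
    simp only [Finset.mul_sum]
    refine Finset.sum_congr rfl fun i _ => Finset.sum_congr rfl fun j _ => ?_
    field_simp

/-- Under (G1), (G2), (G4), the optimal shrinkage intensities satisfy
`λ*_k(p) = O(p^((τ − τ_k)/2))` as `p → ∞`. -/
theorem lamstar_bigO (K : ℕ)
    (A : ℕ → Matrix (Fin K) (Fin K) ℝ) (b : ℕ → Fin K → ℝ) (c : ℕ → ℝ)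
    (hApsd : ∀ p, (A p).PosSemidef)
    (hc : ∀ p, 0 ≤ c p)
    (Δ : ℕ → (Fin K → ℝ) → ℝ)
    (hΔ : ∀ p (lam : Fin K → ℝ), Δ p lam =
      (∑ k, ∑ l, lam k * A p k l * lam l) - 2 * (∑ k, b p k * lam k) + c p)
    (S : Set (Fin K → ℝ))
    (hS : S = {lam | (∀ k, 0 ≤ lam k) ∧ (∑ k, lam k) ≤ 1})
    (lamstar : ℕ → Fin K → ℝ)
    (hlamstar : ∀ p, lamstar p ∈ S ∧ IsMinOn (Δ p) S (lamstar p))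
    (τ : ℝ) (τA : Fin K → ℝ) (hτA : ∀ k, τ ≤ τA k)
    (hG1 : ∃ c₀ C₀ : ℝ, 0 < c₀ ∧ c₀ ≤ C₀ ∧
      ∀ᶠ p : ℕ in atTop, c₀ * (p : ℝ) ^ τ ≤ c p ∧ c p ≤ C₀ * (p : ℝ) ^ τ)
    (hG2 : ∀ k, (fun p : ℕ => b p k) =O[atTop] fun p : ℕ => (p : ℝ) ^ τ)
    (m : ℕ → Fin K → ℝ)
    (hm : ∀ p k, m p k = sInf {x : ℝ | ∃ α : Fin K → ℝ,
      (∀ l, 0 ≤ α l) ∧ α k = 1 ∧ x = ∑ i, ∑ j, α i * A p i j * α j})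
    (hG4 : ∀ k, ∃ ck Ck : ℝ, 0 < ck ∧ ck ≤ Ck ∧
      ∀ᶠ p : ℕ in atTop, ck * (p : ℝ) ^ τA k ≤ m p k ∧ m p k ≤ Ck * (p : ℝ) ^ τA k) :
    ∀ k, (fun p : ℕ => lamstar p k) =O[atTop] fun p : ℕ => (p : ℝ) ^ ((τ - τA k) / 2) := by
  intro k
  obtain ⟨ck, Ck, hck, -, hmk⟩ := hG4 k
  have hB : (fun p : ℕ => ∑ l, |b p l|) =O[atTop] fun p : ℕ => (p : ℝ) ^ τ :=
    IsBigO.fun_sum fun l _ => (hG2 l).abs_left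
  obtain ⟨C, hC⟩ := hB.bound
  -- Every coordinate of `λ*` is at most `1`, and `λ* = 0` is a competitor for the minimum.
  have hquad : ∀ p, ∑ i, ∑ j, lamstar p i * A p i j * lamstar p j ≤ 2 * ∑ l, |b p l| := by
    intro p
    obtain ⟨hmem, hmin⟩ := hlamstar p
    have hzero : (0 : Fin K → ℝ) ∈ S := by simp [hS]
    have h0 := isMinOn_iff.1 hmin 0 hzero
    rw [hΔ, hΔ] at h0
    simp only [Pi.zero_apply, mul_zero, zero_mul, Finset.sum_const_zero] at h0
    rw [hS] at hmem
    have hb : ∑ l, b p l * lamstar p l ≤ ∑ l, |b p l| := by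
      refine Finset.sum_le_sum fun l _ => ?_
      have hl1 : lamstar p l ≤ 1 :=
        (Finset.single_le_sum (fun i _ => hmem.1 i) (Finset.mem_univ l)).trans hmem.2
      calc b p l * lamstar p l ≤ |b p l| * lamstar p l :=
            mul_le_mul_of_nonneg_right (le_abs_self _) (hmem.1 l)
        _ ≤ |b p l| := mul_le_of_le_one_right (abs_nonneg _) hl1
    linarith
  refine IsBigO.of_pow (n := 2) two_ne_zero ?_
  refine IsBigO.of_bound (2 * C / ck) ?_
  filter_upwards [hmk, hC, eventually_gt_atTop 0] with p hp hCp hp0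
  have hpos : (0 : ℝ) < p := by exact_mod_cast hp0
  have hmem := (hlamstar p).1
  rw [hS] at hmem
  have hlow := sq_mul_sInf_le_quadForm (hApsd p) k (lamstar p) hmem.1
  rw [← hm] at hlow
  rw [Real.norm_of_nonneg (Finset.sum_nonneg fun l _ => abs_nonneg (b p l)),
    Real.norm_of_nonneg (Real.rpow_nonneg hpos.le τ)] at hCp
  have hmul : lamstar p k ^ 2 * (ck * (p : ℝ) ^ τA k) ≤ 2 * (C * (p : ℝ) ^ τ) :=
    (mul_le_mul_of_nonneg_left hp.1 (sq_nonneg _)).trans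
      (hlow.trans ((hquad p).trans (mul_le_mul_of_nonneg_left hCp two_pos.le)))
  have hroot : ((p : ℝ) ^ ((τ - τA k) / 2)) ^ 2 = (p : ℝ) ^ τ / (p : ℝ) ^ τA k := by
    rw [← Real.rpow_natCast, ← Real.rpow_mul hpos.le, ← Real.rpow_sub hpos]
    congr 1
    push_cast
    ring
  have hpow : (0 : ℝ) < (p : ℝ) ^ τA k := Real.rpow_pos_of_pos hpos _
  simp only [Pi.pow_apply]
  rw [Real.norm_of_nonneg (sq_nonneg _), Real.norm_of_nonneg (sq_nonneg _), hroot,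
    div_mul_div_comm, le_div_iff₀ (mul_pos hck hpow)]
  linarith
end

section
/- Under hypotheses (G1), (G2), (G3), (G4), for each k one has λ̂_k(p) = O(p^{(τ − τ_k)/2}) as p → ∞. -/
/-!
Write `λ` for `lamhat p`. Comparing `λ` with the point `0 ∈ S` gives `λᵀÂλ ≤ 2 b̂ᵀλ`, and the right
side is `O(p^τ)` because `∑ λ_k ≤ 1`. By homogeneity the infimum in (G4) yields `λᵀAλ ≥ m_k λ_k²` for nonnegative `λ`
(`sInf_mul_sq_le_quadForm`), so with `q = λᵀAλ` every rescaled coordinate `p^(τ_k/2) λ_k` is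
`O(√q)`. Hence (G3) makes `λᵀ(Â - A)λ` a small multiple of `q`, which is absorbed on the left, and
`q = O(p^τ)` (`quadForm_le_of_perturbed`). Therefore `p^(τ_k) λ_k² = O(p^τ)` for each `k`.
-/

open Filter Asymptotics

theorem quadForm_nonneg_s4 {K : ℕ} {A : Matrix (Fin K) (Fin K) ℝ} (hA : A.PosSemidef)
    (u : Fin K → ℝ) : 0 ≤ ∑ i, ∑ j, u i * A i j * u j := by
  have h := hA.dotProduct_mulVec_nonneg u
  simpa [dotProduct, Matrix.mulVec, Finset.mul_sum, mul_assoc] using h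

/-- By homogeneity, the infimum of the form over the slice `α k = 1` of the nonnegative orthant
controls the `k`-th coordinate on the whole orthant. -/
theorem sInf_mul_sq_le_quadForm {K : ℕ} {A : Matrix (Fin K) (Fin K) ℝ} (hA : A.PosSemidef)
    {u : Fin K → ℝ} (hu : ∀ k, 0 ≤ u k) (k : Fin K) :
    sInf {x : ℝ | ∃ α : Fin K → ℝ,
      (∀ l, 0 ≤ α l) ∧ α k = 1 ∧ x = ∑ i, ∑ j, α i * A i j * α j} * u k ^ 2
      ≤ ∑ i, ∑ j, u i * A i j * u j := by
  rcases (hu k).eq_or_lt with h0 | hpos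
  · rw [← h0]
    simpa using quadForm_nonneg_s4 hA u
  · rw [← le_div_iff₀ (by positivity)]
    refine csInf_le ⟨0, ?_⟩ ⟨fun l => u l / u k, fun l => div_nonneg (hu l) hpos.le,
      div_self hpos.ne', ?_⟩
    · rintro x ⟨α, -, -, rfl⟩
      exact quadForm_nonneg_s4 hA α
    · simp only [Finset.sum_div]
      refine Finset.sum_congr rfl fun i _ => Finset.sum_congr rfl fun j _ => ?_
      field_simp

/-- The absorption step: `t k` is the scale of the `k`-th coordinate, and the entrywise
perturbation of `A` is at most `γ / (2 K²)` relative to these scales, so that it costs at most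
half of the form `uᵀAu`. The linear term is at most `2 β` because `∑ u k ≤ 1`. -/
theorem quadForm_le_of_perturbed {K : ℕ} (hK : 0 < K) {A Ahat : Matrix (Fin K) (Fin K) ℝ}
    {u t bhat : Fin K → ℝ} {γ β : ℝ} (hγ : 0 < γ) (hβ : 0 ≤ β)
    (hu : ∀ k, 0 ≤ u k) (hsum : ∑ k, u k ≤ 1)
    (hq : ∀ k, γ * (t k * u k) ^ 2 ≤ ∑ i, ∑ j, u i * A i j * u j)
    (hA : ∀ k l, |Ahat k l - A k l| ≤ γ / (2 * (K : ℝ) ^ 2) * (t k * t l))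
    (hb : ∀ k, bhat k ≤ β)
    (hmin : ∑ i, ∑ j, u i * Ahat i j * u j ≤ 2 * ∑ k, bhat k * u k) :
    ∑ i, ∑ j, u i * A i j * u j ≤ 4 * β := by
  set q := ∑ i, ∑ j, u i * A i j * u j with hqdef
  have hK' : (0 : ℝ) < K := by exact_mod_cast hK
  have hb' : ∑ k, bhat k * u k ≤ β := calc
    ∑ k, bhat k * u k ≤ ∑ k, β * u k :=
      Finset.sum_le_sum fun k _ => mul_le_mul_of_nonneg_right (hb k) (hu k)
    _ = β * ∑ k, u k := by rw [Finset.mul_sum]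
    _ ≤ β := mul_le_of_le_one_right hβ hsum
  have hterm : ∀ i j, u i * A i j * u j - q / (2 * (K : ℝ) ^ 2) ≤ u i * Ahat i j * u j := by
    intro i j
    -- arithmetic-geometric mean inequality between `hq i` and `hq j`
    have h1 : γ * ((t i * u i) * (t j * u j)) ≤ q := by
      nlinarith [hq i, hq j, mul_nonneg hγ.le (sq_nonneg (t i * u i - t j * u j))]
    have h2 := (abs_le.mp (hA i j)).1
    have h3 := mul_le_mul_of_nonneg_right h2 (mul_nonneg (hu i) (hu j))
    have h4 : γ / (2 * (K : ℝ) ^ 2) * (t i * t j) * (u i * u j) ≤ q / (2 * (K : ℝ) ^ 2) := by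
      rw [show γ / (2 * (K : ℝ) ^ 2) * (t i * t j) * (u i * u j)
        = γ * ((t i * u i) * (t j * u j)) / (2 * (K : ℝ) ^ 2) by ring]
      gcongr
    linarith
  have hhalf : q - q / 2 ≤ ∑ i, ∑ j, u i * Ahat i j * u j := by
    refine le_trans (le_of_eq ?_)
      (Finset.sum_le_sum fun i _ => Finset.sum_le_sum fun j _ => hterm i j)
    simp only [Finset.sum_sub_distrib, Finset.sum_const, Finset.card_univ, Fintype.card_fin,
      nsmul_eq_mul, ← hqdef]
    field_simp
  linarith

/-- Under (G1), (G2), (G3), (G4), the estimated shrinkage intensities satisfy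
`λ̂_k(p) = O(p^((τ − τ_k)/2))` as `p → ∞`. -/
theorem lamhat_bigO (K : ℕ)
    (A : ℕ → Matrix (Fin K) (Fin K) ℝ) (b : ℕ → Fin K → ℝ) (c : ℕ → ℝ)
    (hApsd : ∀ p, (A p).PosSemidef)
    (hc : ∀ p, 0 ≤ c p)
    (Ahat : ℕ → Matrix (Fin K) (Fin K) ℝ) (bhat : ℕ → Fin K → ℝ)
    (hAhatsymm : ∀ p, (Ahat p).IsSymm)
    (Δ : ℕ → (Fin K → ℝ) → ℝ)
    (hΔ : ∀ p (lam : Fin K → ℝ), Δ p lam =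
      (∑ k, ∑ l, lam k * A p k l * lam l) - 2 * (∑ k, b p k * lam k) + c p)
    (Δhat : ℕ → (Fin K → ℝ) → ℝ)
    (hΔhat : ∀ p (lam : Fin K → ℝ), Δhat p lam =
      (∑ k, ∑ l, lam k * Ahat p k l * lam l) - 2 * (∑ k, bhat p k * lam k) + c p)
    (S : Set (Fin K → ℝ))
    (hS : S = {lam | (∀ k, 0 ≤ lam k) ∧ (∑ k, lam k) ≤ 1})
    (lamstar : ℕ → Fin K → ℝ)
    (hlamstar : ∀ p, lamstar p ∈ S ∧ IsMinOn (Δ p) S (lamstar p))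
    (lamhat : ℕ → Fin K → ℝ)
    (hlamhat : ∀ p, lamhat p ∈ S ∧ IsMinOn (Δhat p) S (lamhat p))
    (τ : ℝ) (τA : Fin K → ℝ) (hτA : ∀ k, τ ≤ τA k)
    (hG1 : ∃ c₀ C₀ : ℝ, 0 < c₀ ∧ c₀ ≤ C₀ ∧
      ∀ᶠ p : ℕ in atTop, c₀ * (p : ℝ) ^ τ ≤ c p ∧ c p ≤ C₀ * (p : ℝ) ^ τ)
    (hG2 : ∀ k, (fun p : ℕ => b p k) =O[atTop] fun p : ℕ => (p : ℝ) ^ τ)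
    (hG3A : ∀ k l, (fun p : ℕ => Ahat p k l - A p k l)
      =o[atTop] fun p : ℕ => (p : ℝ) ^ ((τA k + τA l) / 2))
    (hG3b : ∀ k, (fun p : ℕ => bhat p k - b p k) =o[atTop] fun p : ℕ => (p : ℝ) ^ τ)
    (m : ℕ → Fin K → ℝ)
    (hm : ∀ p k, m p k = sInf {x : ℝ | ∃ α : Fin K → ℝ,
      (∀ l, 0 ≤ α l) ∧ α k = 1 ∧ x = ∑ i, ∑ j, α i * A p i j * α j})
    (hG4 : ∀ k, ∃ ck Ck : ℝ, 0 < ck ∧ ck ≤ Ck ∧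
      ∀ᶠ p : ℕ in atTop, ck * (p : ℝ) ^ τA k ≤ m p k ∧ m p k ≤ Ck * (p : ℝ) ^ τA k) :
    ∀ k, (fun p : ℕ => lamhat p k) =O[atTop] fun p : ℕ => (p : ℝ) ^ ((τ - τA k) / 2) := by
  intro k
  have hK : 0 < K := k.pos
  have : Nonempty (Fin K) := ⟨k⟩
  have hK' : (0 : ℝ) < K := by exact_mod_cast hK
  -- uniform constants: the least lower constant in (G4), the largest bound for `b̂`
  choose γ Γ hγ _ hm' using hG4
  obtain ⟨k₀, hk₀⟩ := Finite.exists_min γ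
  have hbO : ∀ k, (fun p : ℕ => bhat p k) =O[atTop] fun p : ℕ => (p : ℝ) ^ τ := fun k => by
    simpa using (hG3b k).isBigO.add (hG2 k)
  choose B hB hbB using fun k => (hbO k).exists_pos
  obtain ⟨k₁, hk₁⟩ := Finite.exists_max B
  have hε : 0 < γ k₀ / (2 * (K : ℝ) ^ 2) := div_pos (hγ k₀) (by positivity)
  have hEA : ∀ᶠ p : ℕ in atTop, ∀ i j, ‖Ahat p i j - A p i j‖
      ≤ γ k₀ / (2 * (K : ℝ) ^ 2) * ‖(p : ℝ) ^ ((τA i + τA j) / 2)‖ :=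
    eventually_all.2 fun i => eventually_all.2 fun j => (hG3A i j).def hε
  have hEb : ∀ᶠ p : ℕ in atTop, ∀ i, ‖bhat p i‖ ≤ B i * ‖(p : ℝ) ^ τ‖ :=
    eventually_all.2 fun i => (hbB i).bound
  have hEm := eventually_all.2 hm'
  refine IsBigO.of_bound (√(4 * B k₁ / γ k₀)) ?_
  filter_upwards [hEA, hEb, hEm, eventually_gt_atTop 0] with p hA hb hmp hp
  have hp' : (0 : ℝ) < p := by exact_mod_cast hp
  obtain ⟨hmem, hmin⟩ := hlamhat p
  rw [hS] at hmem
  obtain ⟨hu, hsum⟩ := hmem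
  -- `0 ∈ S`, and `Δ̂_p(0) = c(p)`
  have h0 : Δhat p (lamhat p) ≤ Δhat p 0 := hmin (by rw [hS]; simp)
  rw [hΔhat, hΔhat] at h0
  simp only [Pi.zero_apply, zero_mul, mul_zero, Finset.sum_const_zero, sub_zero] at h0
  have hsq : ∀ i, ((p : ℝ) ^ (τA i / 2)) ^ 2 = (p : ℝ) ^ τA i := fun i => by
    rw [← Real.rpow_mul_natCast hp'.le]
    congr 1
    push_cast
    ring
  have hq : ∀ i, γ k₀ * ((p : ℝ) ^ (τA i / 2) * lamhat p i) ^ 2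
      ≤ ∑ i, ∑ j, lamhat p i * A p i j * lamhat p j := fun i => by
    refine le_trans ?_ (sInf_mul_sq_le_quadForm (hApsd p) hu i)
    rw [← hm p i, mul_pow, hsq, ← mul_assoc]
    refine mul_le_mul_of_nonneg_right (le_trans ?_ (hmp i).1) (sq_nonneg _)
    exact mul_le_mul_of_nonneg_right (hk₀ i) (by positivity)
  have hmain := quadForm_le_of_perturbed (β := B k₁ * (p : ℝ) ^ τ) (bhat := bhat p)
    (Ahat := Ahat p) hK (hγ k₀) (mul_nonneg (hB k₁).le (by positivity)) hu hsum
    hq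
    (fun i j => by
      have h := hA i j
      rw [Real.norm_eq_abs, Real.norm_of_nonneg (by positivity), add_div,
        Real.rpow_add hp'] at h
      exact h)
    (fun i => by
      have h := hb i
      rw [Real.norm_eq_abs, Real.norm_of_nonneg (by positivity)] at h
      exact (le_abs_self _).trans (h.trans
        (mul_le_mul_of_nonneg_right (hk₁ i) (by positivity))))
    (by linarith)
  rw [Real.norm_of_nonneg (hu k), Real.norm_of_nonneg (by positivity)]
  have hC : 0 ≤ 4 * B k₁ / γ k₀ := div_nonneg (by linarith [hB k₁]) (hγ k₀).le
  refine (sq_le_sq₀ (hu k) (by positivity)).1 ?_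
  have hratio : ((p : ℝ) ^ ((τ - τA k) / 2)) ^ 2 = (p : ℝ) ^ τ / (p : ℝ) ^ τA k := by
    rw [← Real.rpow_mul_natCast hp'.le, ← Real.rpow_sub hp']
    congr 1
    push_cast
    ring
  have hfin := (hq k).trans hmain
  rw [mul_pow, hsq] at hfin
  rw [mul_pow, Real.sq_sqrt hC, hratio, div_mul_div_comm,
    le_div_iff₀ (mul_pos (hγ k₀) (by positivity))]
  linarith
end

section
/- Under hypotheses (G1), (G2), (G3), (G4), the multi-target shrinkage procedure is consistent in the sense that (Δ_p(λ̂(p)) − Δ_p(λ*(p))) / c(p) → 0 as p → ∞. -/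
/-!
The deterministic heart of the matter is a comparison at a fixed `p`. Write `Q` for the quadratic
form of `A`, `s_k = p ^ (τ_k / 2)` and `r = p ^ τ`. Scaling a nonnegative `lam` so that its `k`-th
coordinate is `1` shows `lam_k ^ 2 * m_k ≤ Q(lam)` (`sq_mul_sInf_le`), so (G4) and Cauchy-Schwarz
give `(∑ s_k lam_k) ^ 2 ≤ M * Q(lam)` on `S` with `M` independent of `p`. By (G3), the perturbation
of the quadratic form is therefore at most `ε * M * Q(lam)`.

Since `0 ∈ S`, both minimizers beat `0`, which forces `Q` to be `O(r)` at both of them; for `lamhat`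
the perturbation `ε * M * Q` is absorbed into `Q` as soon as `ε * M ≤ 1 / 2`. Hence the two
objectives differ by `O(ε * r)` at both minimizers, and so does the regret (`regret_le`). Dividing
by `c(p)`, which is of order `r` by (G1), gives the claim as `ε` is arbitrary.
-/

open Filter Asymptotics

lemma quad_nonneg {K : ℕ} {A : Matrix (Fin K) (Fin K) ℝ} (hA : A.PosSemidef) (v : Fin K → ℝ) :
    0 ≤ ∑ i, ∑ j, v i * A i j * v j := by
  have h := hA.dotProduct_mulVec_nonneg v
  simpa [dotProduct, Matrix.mulVec, Finset.mul_sum, mul_assoc] using h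

/-- A nonnegative vector with `v k ≠ 0` is `v k` times a competitor in the infimum defining
`m_k`. -/
lemma sq_mul_sInf_le {K : ℕ} {A : Matrix (Fin K) (Fin K) ℝ} (hA : A.PosSemidef)
    {v : Fin K → ℝ} (hv : ∀ k, 0 ≤ v k) (k : Fin K) :
    v k ^ 2 * sInf {x : ℝ | ∃ α : Fin K → ℝ,
      (∀ l, 0 ≤ α l) ∧ α k = 1 ∧ x = ∑ i, ∑ j, α i * A i j * α j}
      ≤ ∑ i, ∑ j, v i * A i j * v j := by
  rcases eq_or_lt_of_le (hv k) with h0 | hpos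
  · rw [← h0]
    simpa using quad_nonneg hA v
  · have hle : sInf {x : ℝ | ∃ α : Fin K → ℝ,
        (∀ l, 0 ≤ α l) ∧ α k = 1 ∧ x = ∑ i, ∑ j, α i * A i j * α j}
        ≤ (∑ i, ∑ j, v i * A i j * v j) / v k ^ 2 := by
      apply csInf_le
      · refine ⟨0, ?_⟩
        rintro x ⟨α, -, -, rfl⟩
        exact quad_nonneg hA α
      · refine ⟨fun i => v i / v k, fun l => div_nonneg (hv l) hpos.le, div_self hpos.ne', ?_⟩
        simp only [Finset.sum_div]
        refine Finset.sum_congr rfl fun i _ => Finset.sum_congr rfl fun j _ => ?_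
        field_simp
    calc _ ≤ v k ^ 2 * ((∑ i, ∑ j, v i * A i j * v j) / v k ^ 2) := by gcongr
      _ = _ := by field_simp

lemma abs_linear_le {K : ℕ} {d v : Fin K → ℝ} {β : ℝ} (hβ : 0 ≤ β) (hd : ∀ k, |d k| ≤ β)
    (hv : ∀ k, 0 ≤ v k) (hv1 : ∑ k, v k ≤ 1) : |∑ k, d k * v k| ≤ β := by
  calc |∑ k, d k * v k| ≤ ∑ k, |d k * v k| := Finset.abs_sum_le_sum_abs _ _
    _ ≤ ∑ k, β * v k := by
        refine Finset.sum_le_sum fun k _ => ?_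
        rw [abs_mul, abs_of_nonneg (hv k)]
        exact mul_le_mul_of_nonneg_right (hd k) (hv k)
    _ = β * ∑ k, v k := by rw [Finset.mul_sum]
    _ ≤ β * 1 := by gcongr
    _ = β := mul_one β

lemma abs_quad_le {K : ℕ} {E : Fin K → Fin K → ℝ} {s v : Fin K → ℝ} {ε : ℝ}
    (hE : ∀ k l, |E k l| ≤ ε * (s k * s l)) (hv : ∀ k, 0 ≤ v k) :
    |∑ k, ∑ l, v k * E k l * v l| ≤ ε * (∑ k, s k * v k) ^ 2 := by
  calc |∑ k, ∑ l, v k * E k l * v l| ≤ ∑ k, ∑ l, |v k * E k l * v l| :=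
        (Finset.abs_sum_le_sum_abs _ _).trans
          (Finset.sum_le_sum fun k _ => Finset.abs_sum_le_sum_abs _ _)
    _ ≤ ∑ k, ∑ l, ε * ((s k * v k) * (s l * v l)) := by
        refine Finset.sum_le_sum fun k _ => Finset.sum_le_sum fun l _ => ?_
        rw [abs_mul, abs_mul, abs_of_nonneg (hv k), abs_of_nonneg (hv l)]
        have := mul_le_mul_of_nonneg_left (hE k l) (mul_nonneg (hv k) (hv l))
        linarith
    _ = ε * (∑ k, s k * v k) ^ 2 := by
        rw [sq, Finset.sum_mul_sum, Finset.mul_sum]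
        simp only [Finset.mul_sum]

/-- The regret bound at a fixed `p`: if the entries of `A` and `b` are perturbed by at most
`ε * s_k * s_l` and `ε * r`, then minimizing the perturbed objective costs `O(ε * r)`, with a
constant depending only on the coercivity constant `M` and the size `B` of `b / r`. Here `w` is the
perturbed minimizer and `u` the true one; only the comparisons between `0`, `u` and `w` are needed. -/
lemma regret_le {K : ℕ} {A Ahat : Matrix (Fin K) (Fin K) ℝ} {b bhat s u w : Fin K → ℝ}
    {c r ε B M : ℝ} {D Dhat : (Fin K → ℝ) → ℝ}
    (hD : ∀ v, D v = (∑ k, ∑ l, v k * A k l * v l) - 2 * (∑ k, b k * v k) + c)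
    (hDhat : ∀ v, Dhat v = (∑ k, ∑ l, v k * Ahat k l * v l) - 2 * (∑ k, bhat k * v k) + c)
    (hr : 0 ≤ r) (hε : 0 ≤ ε) (hε1 : ε ≤ 1) (hB : 0 ≤ B) (hM : 0 ≤ M) (hεM : ε * M ≤ 1 / 2)
    (hE : ∀ k l, |Ahat k l - A k l| ≤ ε * (s k * s l))
    (hb : ∀ k, |b k| ≤ B * r) (hbhat : ∀ k, |bhat k - b k| ≤ ε * r)
    (hQ : ∀ v : Fin K → ℝ, (∀ k, 0 ≤ v k) →
      (∑ k, s k * v k) ^ 2 ≤ M * ∑ k, ∑ l, v k * A k l * v l)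
    (hu : ∀ k, 0 ≤ u k) (hu1 : ∑ k, u k ≤ 1) (hu0 : D u ≤ D 0)
    (hw : ∀ k, 0 ≤ w k) (hw1 : ∑ k, w k ≤ 1) (hw0 : Dhat w ≤ Dhat 0) (hwu : Dhat w ≤ Dhat u) :
    D w - D u ≤ (8 * M * (B + 1) + 4) * r * ε := by
  have quad : ∀ v : Fin K → ℝ, (∀ k, 0 ≤ v k) →
      |(∑ k, ∑ l, v k * Ahat k l * v l) - ∑ k, ∑ l, v k * A k l * v l|
        ≤ ε * (M * ∑ k, ∑ l, v k * A k l * v l) := by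
    intro v hv
    have h := (abs_quad_le (E := fun k l => Ahat k l - A k l) hE hv).trans
      (mul_le_mul_of_nonneg_left (hQ v hv) hε)
    simpa only [mul_sub, sub_mul, Finset.sum_sub_distrib] using h
  have lin : ∀ v : Fin K → ℝ, (∀ k, 0 ≤ v k) → ∑ k, v k ≤ 1 →
      |(∑ k, bhat k * v k) - ∑ k, b k * v k| ≤ ε * r := by
    intro v hv hv1
    have h := abs_linear_le (d := fun k => bhat k - b k) (mul_nonneg hε hr) hbhat hv hv1
    simpa only [sub_mul, Finset.sum_sub_distrib] using h
  have bu := abs_le.1 (abs_linear_le (mul_nonneg hB hr) hb hu hu1)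
  have bw := abs_le.1 (abs_linear_le (mul_nonneg hB hr) hb hw hw1)
  have lu := abs_le.1 (lin u hu hu1)
  have lw := abs_le.1 (lin w hw hw1)
  have qu := abs_le.1 (quad u hu)
  have qw := abs_le.1 (quad w hw)
  rw [hD, hD 0] at hu0
  rw [hDhat, hDhat 0] at hw0
  rw [hDhat, hDhat] at hwu
  rw [hD, hD]
  simp only [Pi.zero_apply, mul_zero, zero_mul, Finset.sum_const_zero] at hu0 hw0
  generalize (∑ k, ∑ l, u k * A k l * u l) = Qu at *
  generalize (∑ k, ∑ l, w k * A k l * w l) = Qw at *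
  generalize (∑ k, ∑ l, u k * Ahat k l * u l) = Qhu at *
  generalize (∑ k, ∑ l, w k * Ahat k l * w l) = Qhw at *
  generalize (∑ k, b k * u k) = Lu at *
  generalize (∑ k, b k * w k) = Lw at *
  generalize (∑ k, bhat k * u k) = Lhu at *
  generalize (∑ k, bhat k * w k) = Lhw at *
  have hBr : 0 ≤ B * r := mul_nonneg hB hr
  have hεr : ε * r ≤ r := mul_le_of_le_one_left hr hε1
  have hQu : Qu ≤ 4 * (B + 1) * r := by linarith
  have hQw : Qw ≤ 4 * (B + 1) * r := by
    rcases le_total Qw 0 with h | h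
    · linarith
    · have := mul_le_mul_of_nonneg_right hεM h
      linarith
  have eu := mul_le_mul_of_nonneg_left hQu (mul_nonneg hε hM)
  have ew := mul_le_mul_of_nonneg_left hQw (mul_nonneg hε hM)
  linarith

/-- Under (G1), (G2), (G3), (G4), the multi-target shrinkage procedure is consistent:
`(Δ_p(λ̂(p)) − Δ_p(λ*(p))) / c(p) → 0` as `p → ∞`. -/
theorem mts_consistency (K : ℕ)
    (A : ℕ → Matrix (Fin K) (Fin K) ℝ) (b : ℕ → Fin K → ℝ) (c : ℕ → ℝ)
    (hApsd : ∀ p, (A p).PosSemidef)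
    (hc : ∀ p, 0 ≤ c p)
    (Ahat : ℕ → Matrix (Fin K) (Fin K) ℝ) (bhat : ℕ → Fin K → ℝ)
    (hAhatsymm : ∀ p, (Ahat p).IsSymm)
    (Δ : ℕ → (Fin K → ℝ) → ℝ)
    (hΔ : ∀ p (lam : Fin K → ℝ), Δ p lam =
      (∑ k, ∑ l, lam k * A p k l * lam l) - 2 * (∑ k, b p k * lam k) + c p)
    (Δhat : ℕ → (Fin K → ℝ) → ℝ)
    (hΔhat : ∀ p (lam : Fin K → ℝ), Δhat p lam =
      (∑ k, ∑ l, lam k * Ahat p k l * lam l) - 2 * (∑ k, bhat p k * lam k) + c p)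
    (S : Set (Fin K → ℝ))
    (hS : S = {lam | (∀ k, 0 ≤ lam k) ∧ (∑ k, lam k) ≤ 1})
    (lamstar : ℕ → Fin K → ℝ)
    (hlamstar : ∀ p, lamstar p ∈ S ∧ IsMinOn (Δ p) S (lamstar p))
    (lamhat : ℕ → Fin K → ℝ)
    (hlamhat : ∀ p, lamhat p ∈ S ∧ IsMinOn (Δhat p) S (lamhat p))
    (τ : ℝ) (τA : Fin K → ℝ) (hτA : ∀ k, τ ≤ τA k)
    (hG1 : ∃ c₀ C₀ : ℝ, 0 < c₀ ∧ c₀ ≤ C₀ ∧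
      ∀ᶠ p : ℕ in atTop, c₀ * (p : ℝ) ^ τ ≤ c p ∧ c p ≤ C₀ * (p : ℝ) ^ τ)
    (hG2 : ∀ k, (fun p : ℕ => b p k) =O[atTop] fun p : ℕ => (p : ℝ) ^ τ)
    (hG3A : ∀ k l, (fun p : ℕ => Ahat p k l - A p k l)
      =o[atTop] fun p : ℕ => (p : ℝ) ^ ((τA k + τA l) / 2))
    (hG3b : ∀ k, (fun p : ℕ => bhat p k - b p k) =o[atTop] fun p : ℕ => (p : ℝ) ^ τ)
    (m : ℕ → Fin K → ℝ)
    (hm : ∀ p k, m p k = sInf {x : ℝ | ∃ α : Fin K → ℝ,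
      (∀ l, 0 ≤ α l) ∧ α k = 1 ∧ x = ∑ i, ∑ j, α i * A p i j * α j})
    (hG4 : ∀ k, ∃ ck Ck : ℝ, 0 < ck ∧ ck ≤ Ck ∧
      ∀ᶠ p : ℕ in atTop, ck * (p : ℝ) ^ τA k ≤ m p k ∧ m p k ≤ Ck * (p : ℝ) ^ τA k) :
    Tendsto (fun p : ℕ => (Δ p (lamhat p) - Δ p (lamstar p)) / c p) atTop (nhds 0) := by
  obtain ⟨c₀, C₀, hc₀, -, hcb⟩ := hG1
  obtain ⟨B, hB, hbB⟩ := (isBigO_pi.2 hG2).exists_nonneg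
  choose ck Ck hck _ hmk using hG4
  -- Each term `(s_k * lam_k) ^ 2` is at most `Q / ck k`; Cauchy-Schwarz costs the factor `K`.
  obtain ⟨M, hMdef⟩ : ∃ M : ℝ, M = K * ∑ k, (ck k)⁻¹ := ⟨_, rfl⟩
  have hM : 0 ≤ M := by
    rw [hMdef]
    exact mul_nonneg (Nat.cast_nonneg _) (Finset.sum_nonneg fun k _ => (inv_pos.2 (hck k)).le)
  have hzero : (0 : Fin K → ℝ) ∈ S := by simp [hS]
  obtain ⟨C, hCdef⟩ : ∃ C : ℝ, C = 8 * M * (B + 1) + 4 := ⟨_, rfl⟩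
  have hC : 0 < C := by rw [hCdef]; positivity
  rw [Metric.tendsto_nhds]
  intro δ hδ
  obtain ⟨ε, hε, hε1, hεM, hεδ⟩ : ∃ ε : ℝ, 0 < ε ∧ ε ≤ 1 ∧ ε * M ≤ 1 / 2 ∧ C * ε < δ * c₀ := by
    refine ⟨min (1 / (2 * (M + 1))) (δ * c₀ / (2 * C)), by positivity, ?_, ?_, ?_⟩
    · refine (min_le_left _ _).trans ?_
      rw [div_le_one (by positivity)]
      linarith
    · refine (mul_le_mul_of_nonneg_right (min_le_left _ _) hM).trans ?_
      rw [div_mul_eq_mul_div, div_le_div_iff₀ (by positivity) (by positivity)]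
      linarith
    · refine (mul_le_mul_of_nonneg_left (min_le_right _ _) hC.le).trans_lt ?_
      have : C * (δ * c₀ / (2 * C)) = δ * c₀ / 2 := by field_simp
      have : 0 < δ * c₀ := by positivity
      linarith
  have hE : ∀ᶠ p : ℕ in atTop, ∀ k l,
      ‖Ahat p k l - A p k l‖ ≤ ε * ‖(p : ℝ) ^ ((τA k + τA l) / 2)‖ :=
    eventually_all.2 fun k => eventually_all.2 fun l => (hG3A k l).bound hε
  have hbh : ∀ᶠ p : ℕ in atTop, ∀ k, ‖bhat p k - b p k‖ ≤ ε * ‖(p : ℝ) ^ τ‖ :=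
    eventually_all.2 fun k => (hG3b k).bound hε
  filter_upwards [hcb, hbB.bound, eventually_all.2 hmk, hE, hbh, eventually_gt_atTop 0]
    with p hcp hbp hmp hEp hbhp hp
  have hp' : (0 : ℝ) < p := Nat.cast_pos.2 hp
  have hr : 0 < (p : ℝ) ^ τ := Real.rpow_pos_of_pos hp' τ
  have hcpos : 0 < c p := (mul_pos hc₀ hr).trans_le hcp.1
  rw [Real.norm_of_nonneg hr.le] at hbp hbhp
  obtain ⟨hu, humin⟩ := hlamstar p
  obtain ⟨hw, hwmin⟩ := hlamhat p
  have hlow : 0 ≤ Δ p (lamhat p) - Δ p (lamstar p) := sub_nonneg.2 (humin hw)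
  have hu0 := humin hzero
  have hw0 := hwmin hzero
  have hwu := hwmin hu
  rw [hS] at hu hw
  have key : Δ p (lamhat p) - Δ p (lamstar p) ≤ C * (p : ℝ) ^ τ * ε := by
    rw [hCdef]
    refine regret_le (s := fun k => (p : ℝ) ^ (τA k / 2)) (hΔ p) (hΔhat p) hr.le hε.le hε1 hB hM
      hεM (fun k l => ?_) (fun k => (norm_le_pi_norm (b p) k).trans hbp) hbhp (fun v hv => ?_)
      hu.1 hu.2 hu0 hw.1 hw.2 hw0 hwu
    · have h := hEp k l
      rwa [Real.norm_of_nonneg (Real.rpow_nonneg hp'.le _), add_div, Real.rpow_add hp'] at h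
    · have hterm : ∀ k, ((p : ℝ) ^ (τA k / 2) * v k) ^ 2
          ≤ (ck k)⁻¹ * ∑ i, ∑ j, v i * A p i j * v j := by
        intro k
        have h1 := sq_mul_sInf_le (hApsd p) hv k
        rw [← hm p k] at h1
        have h2 := (mul_le_mul_of_nonneg_left (hmp k).1 (sq_nonneg (v k))).trans h1
        have h3 : ((p : ℝ) ^ (τA k / 2)) ^ 2 = (p : ℝ) ^ τA k := by
          rw [sq, ← Real.rpow_add hp', add_halves]
        rw [mul_pow, h3, ← div_eq_inv_mul, le_div_iff₀ (hck k)]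
        linarith
      calc (∑ k, (p : ℝ) ^ (τA k / 2) * v k) ^ 2
          ≤ K * ∑ k, ((p : ℝ) ^ (τA k / 2) * v k) ^ 2 := by
            simpa using sq_sum_le_card_mul_sum_sq (s := (Finset.univ : Finset (Fin K)))
              (f := fun k => (p : ℝ) ^ (τA k / 2) * v k)
        _ ≤ K * ∑ k, (ck k)⁻¹ * ∑ i, ∑ j, v i * A p i j * v j :=
            mul_le_mul_of_nonneg_left (Finset.sum_le_sum fun k _ => hterm k) (Nat.cast_nonneg _)
        _ = M * ∑ i, ∑ j, v i * A p i j * v j := by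
            rw [hMdef, ← Finset.sum_mul, mul_assoc]
  rw [Real.dist_eq, sub_zero, abs_of_nonneg (div_nonneg hlow hcpos.le), div_lt_iff₀ hcpos]
  calc Δ p (lamhat p) - Δ p (lamstar p) ≤ C * (p : ℝ) ^ τ * ε := key
    _ = (C * ε) * (p : ℝ) ^ τ := by ring
    _ < (δ * c₀) * (p : ℝ) ^ τ := mul_lt_mul_of_pos_right hεδ hr
    _ = δ * (c₀ * (p : ℝ) ^ τ) := by ring
    _ ≤ δ * c p := mul_le_mul_of_nonneg_left hcp.1 hδ.le
end

section
/- Under hypotheses (G1), (G2), (G3) and the strengthened hypothesis (G4'), the estimated shrinkage intensities converge to the optimal ones: ‖λ̂(p) − λ*(p)‖ → 0 as p → ∞. -/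
/-!
Write `d = λ̂ - λ*`, `q k = p ^ (τ_k / 2)` and `P = p ^ (τ / 2)`, so `P ≤ q k`. By homogeneity, (G4') says
that `αᵀAα ≥ C (q k α_k)²` for every vector `α` and index `k`, so `A` is coercive for the weighted norm
`∑ k, q k |α k|` (`weighted_sq_le`).

* Comparing `λ*` with `0 ∈ S` gives `λ*ᵀAλ* ≤ 2 bᵀλ* = O(P²)`, hence `∑ k, q k λ*_k = O(P)`.
* Comparing `λ*` with the midpoint of `λ*` and `λ̂` gives `dᵀAd / 2 ≤ Δ(λ̂) - Δ(λ*)`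
  (`half_quad_sub_le`). Since `λ̂` minimizes `Δ̂`, the right-hand side is at most
  `(Δ - Δ̂)(λ̂) - (Δ - Δ̂)(λ*)`, which by (G3) is at most `ε U (U + O(P))`,
  where `U = ∑ k, q k |d k|`.

Coercivity turns this into `U ≤ O(ε) (U + O(P))`, so `U = O(ε P)` and `|d k| ≤ U / P = O(ε)`. The
lemma `abs_sub_le_of_perturbation` carries out this argument for a fixed `p`.
-/

open Filter Asymptotics

/-- The infimum in (G4') controls the quadratic form on all vectors, by rescaling `α` to `α k = 1`. -/
lemma sInf_mul_sq_le_quad {ι : Type*} [Fintype ι] {A : Matrix ι ι ℝ} (hA : A.PosSemidef)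
    (k : ι) (α : ι → ℝ) :
    sInf {x : ℝ | ∃ β : ι → ℝ, β k = 1 ∧ x = ∑ i, ∑ j, β i * A i j * β j} * α k ^ 2
      ≤ ∑ i, ∑ j, α i * A i j * α j := by
  have hnn : ∀ β : ι → ℝ, 0 ≤ ∑ i, ∑ j, β i * A i j * β j := by
    intro β
    have h := hA.dotProduct_mulVec_nonneg β
    simpa [dotProduct, Matrix.mulVec, Finset.mul_sum, mul_assoc] using h
  rcases eq_or_ne (α k) 0 with h0 | h0
  · simpa [h0] using hnn α
  have hle : sInf {x : ℝ | ∃ β : ι → ℝ, β k = 1 ∧ x = ∑ i, ∑ j, β i * A i j * β j}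
      ≤ ∑ i, ∑ j, (α i / α k) * A i j * (α j / α k) := by
    refine csInf_le ⟨0, ?_⟩ ⟨fun i => α i / α k, div_self h0, rfl⟩
    rintro x ⟨β, -, rfl⟩
    exact hnn β
  have heq : (∑ i, ∑ j, (α i / α k) * A i j * (α j / α k)) * α k ^ 2
      = ∑ i, ∑ j, α i * A i j * α j := by
    simp only [Finset.sum_mul]
    refine Finset.sum_congr rfl fun i _ => Finset.sum_congr rfl fun j _ => ?_
    field_simp
  rw [← heq]
  exact mul_le_mul_of_nonneg_right hle (sq_nonneg _)

/-- Coordinatewise coercivity gives coercivity for the weighted `ℓ¹` norm, by Cauchy–Schwarz. -/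
lemma weighted_sq_le {ι : Type*} [Fintype ι] {q α : ι → ℝ} {C Q : ℝ}
    (h : ∀ k, C * (q k * α k) ^ 2 ≤ Q) (hC : 0 ≤ C) :
    C * (∑ k, q k * |α k|) ^ 2 ≤ (Fintype.card ι : ℝ) ^ 2 * Q := by
  have h1 : (∑ k, q k * |α k|) ^ 2 ≤ (Fintype.card ι : ℝ) * ∑ k, (q k * |α k|) ^ 2 :=
    sq_sum_le_card_mul_sum_sq
  have h2 : ∑ k, C * (q k * |α k|) ^ 2 ≤ (Fintype.card ι : ℝ) * Q := by
    have := Finset.sum_le_card_nsmul Finset.univ (fun k => C * (q k * |α k|) ^ 2) Q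
      (fun k _ => by simpa [mul_pow] using h k)
    simpa using this
  rw [← Finset.mul_sum] at h2
  calc C * (∑ k, q k * |α k|) ^ 2
      ≤ C * ((Fintype.card ι : ℝ) * ∑ k, (q k * |α k|) ^ 2) := by gcongr
    _ = (Fintype.card ι : ℝ) * (C * ∑ k, (q k * |α k|) ^ 2) := by ring
    _ ≤ (Fintype.card ι : ℝ) * ((Fintype.card ι : ℝ) * Q) := by gcongr
    _ = _ := by ring

/-- If `y` does at least as well as the midpoint of `x` and `y` for a quadratic objective, then the
objective gap is at least half the quadratic form of `x - y` (parallelogram identity). -/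
lemma half_quad_sub_le {ι : Type*} [Fintype ι] (A : Matrix ι ι ℝ) (b x y : ι → ℝ)
    (h : (∑ k, ∑ l, y k * A k l * y l) - 2 * (∑ k, b k * y k)
      ≤ (∑ k, ∑ l, ((x k + y k) / 2) * A k l * ((x l + y l) / 2))
        - 2 * (∑ k, b k * ((x k + y k) / 2))) :
    (∑ k, ∑ l, (x k - y k) * A k l * (x l - y l)) / 2
      ≤ ((∑ k, ∑ l, x k * A k l * x l) - 2 * (∑ k, b k * x k))
        - ((∑ k, ∑ l, y k * A k l * y l) - 2 * (∑ k, b k * y k)) := by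
  have h1 : (∑ k, ∑ l, ((x k + y k) / 2) * A k l * ((x l + y l) / 2))
      = ((∑ k, ∑ l, x k * A k l * x l) + (∑ k, ∑ l, y k * A k l * y l)) / 2
        - (∑ k, ∑ l, (x k - y k) * A k l * (x l - y l)) / 4 := by
    simp only [Finset.sum_div, ← Finset.sum_add_distrib, ← Finset.sum_sub_distrib]
    exact Finset.sum_congr rfl fun k _ => Finset.sum_congr rfl fun l _ => by ring
  have h2 : (∑ k, b k * ((x k + y k) / 2)) = ((∑ k, b k * x k) + ∑ k, b k * y k) / 2 := by
    simp only [Finset.sum_div, ← Finset.sum_add_distrib]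
    exact Finset.sum_congr rfl fun k _ => by ring
  rw [h1, h2] at h
  linarith

/-- The effect of an entrywise perturbation `A' - A` of size `ε q_k q_l` on the difference of the
quadratic forms at `x` and `y`. -/
lemma quad_perturbation_le {ι : Type*} [Fintype ι] {A A' : Matrix ι ι ℝ} {q x y : ι → ℝ} {ε : ℝ}
    (hE : ∀ k l, |A' k l - A k l| ≤ ε * (q k * q l))
    (hx : ∀ k, 0 ≤ x k) (hy : ∀ k, 0 ≤ y k) :
    ((∑ k, ∑ l, x k * A k l * x l) - (∑ k, ∑ l, x k * A' k l * x l))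
      - ((∑ k, ∑ l, y k * A k l * y l) - (∑ k, ∑ l, y k * A' k l * y l))
      ≤ ε * ((∑ k, q k * |x k - y k|) * ((∑ k, q k * x k) + ∑ k, q k * y k)) := by
  have hr : ε * ((∑ k, q k * |x k - y k|) * ((∑ k, q k * x k) + ∑ k, q k * y k))
      = ∑ k, ∑ l, ε * (q k * q l) * (|x k - y k| * x l + y k * |x l - y l|) := by
    rw [mul_add, mul_comm (∑ k, q k * |x k - y k|) (∑ k, q k * y k),
      Finset.sum_mul_sum, Finset.sum_mul_sum]
    simp only [Finset.mul_sum, ← Finset.sum_add_distrib]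
    exact Finset.sum_congr rfl fun k _ => Finset.sum_congr rfl fun l _ => by ring
  rw [hr]
  simp only [← Finset.sum_sub_distrib]
  refine Finset.sum_le_sum fun k _ => Finset.sum_le_sum fun l _ => ?_
  calc x k * A k l * x l - x k * A' k l * x l - (y k * A k l * y l - y k * A' k l * y l)
      = -((A' k l - A k l) * ((x k - y k) * x l + y k * (x l - y l))) := by ring
    _ ≤ |(A' k l - A k l) * ((x k - y k) * x l + y k * (x l - y l))| := neg_le_abs _
    _ = |A' k l - A k l| * |(x k - y k) * x l + y k * (x l - y l)| := abs_mul _ _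
    _ ≤ ε * (q k * q l) * (|x k - y k| * x l + y k * |x l - y l|) := by
      refine mul_le_mul (hE k l) ?_ (abs_nonneg _) ((abs_nonneg _).trans (hE k l))
      refine (abs_add_le _ _).trans_eq ?_
      rw [abs_mul, abs_mul, abs_of_nonneg (hx l), abs_of_nonneg (hy k)]

/-- The quantitative stability estimate for a fixed `p`: `y` minimizes the true objective and `x` the
perturbed one over the set of nonnegative vectors of total mass at most one. The minimality of `y`
enters only through the competitors `0` and `(x + y) / 2`. -/
lemma abs_sub_le_of_perturbation {ι : Type*} [Fintype ι] {A A' : Matrix ι ι ℝ}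
    {b b' q x y : ι → ℝ} {C B M P ε : ℝ}
    (hC : 0 < C) (hB : 0 ≤ B) (hM : 0 ≤ M) (hP : 0 < P) (hε : 0 ≤ ε)
    (hBM : 2 * B * (Fintype.card ι : ℝ) ^ 2 ≤ C * M ^ 2)
    (hεC : 4 * (Fintype.card ι : ℝ) ^ 2 * ε ≤ C)
    (hq : ∀ k, P ≤ q k)
    (hA : ∀ (α : ι → ℝ) k, C * (q k * α k) ^ 2 ≤ ∑ i, ∑ j, α i * A i j * α j)
    (hb : ∀ k, |b k| ≤ B * P ^ 2)
    (hE : ∀ k l, |A' k l - A k l| ≤ ε * (q k * q l))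
    (he : ∀ k, |b' k - b k| ≤ ε * P ^ 2)
    (hx : ∀ k, 0 ≤ x k) (hy : ∀ k, 0 ≤ y k) (hy1 : ∑ k, y k ≤ 1)
    (h0 : (∑ k, ∑ l, y k * A k l * y l) - 2 * (∑ k, b k * y k) ≤ 0)
    (hmid : (∑ k, ∑ l, y k * A k l * y l) - 2 * (∑ k, b k * y k)
      ≤ (∑ k, ∑ l, ((x k + y k) / 2) * A k l * ((x l + y l) / 2))
        - 2 * (∑ k, b k * ((x k + y k) / 2)))
    (hhat : (∑ k, ∑ l, x k * A' k l * x l) - 2 * (∑ k, b' k * x k)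
      ≤ (∑ k, ∑ l, y k * A' k l * y l) - 2 * (∑ k, b' k * y k)) (k : ι) :
    C * |x k - y k| ≤ 8 * (Fintype.card ι : ℝ) ^ 2 * (M + 1) * ε := by
  have hq0 : ∀ k, 0 ≤ q k := fun k => hP.le.trans (hq k)
  set n : ℝ := (Fintype.card ι : ℝ)
  set U := ∑ k, q k * |x k - y k| with hU
  set X := ∑ k, q k * x k with hX
  set Y := ∑ k, q k * y k with hY
  have hU0 : 0 ≤ U := Finset.sum_nonneg fun k _ => mul_nonneg (hq0 k) (abs_nonneg _)
  have hY0 : 0 ≤ Y := Finset.sum_nonneg fun k _ => mul_nonneg (hq0 k) (hy k)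
  have hXUY : X ≤ U + Y := by
    rw [hX, hU, hY, ← Finset.sum_add_distrib]
    refine Finset.sum_le_sum fun k _ => ?_
    rw [← mul_add]
    exact mul_le_mul_of_nonneg_left (by linarith [le_abs_self (x k - y k)]) (hq0 k)
  have hYM : Y ≤ M * P := by
    have h1 : C * Y ^ 2 ≤ n ^ 2 * ∑ i, ∑ j, y i * A i j * y j := by
      have := weighted_sq_le (hA y) hC.le
      simpa only [abs_of_nonneg (hy _)] using this
    have h2 : ∑ k, b k * y k ≤ B * P ^ 2 := by
      calc ∑ k, b k * y k ≤ ∑ k, B * P ^ 2 * y k := Finset.sum_le_sum fun k _ =>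
            mul_le_mul_of_nonneg_right ((le_abs_self _).trans (hb k)) (hy k)
        _ = B * P ^ 2 * ∑ k, y k := by rw [Finset.mul_sum]
        _ ≤ B * P ^ 2 * 1 := by gcongr
        _ = _ := mul_one _
    have h3 : C * Y ^ 2 ≤ C * (M * P) ^ 2 := by
      calc C * Y ^ 2 ≤ n ^ 2 * ∑ i, ∑ j, y i * A i j * y j := h1
        _ ≤ n ^ 2 * (2 * (B * P ^ 2)) := by gcongr; linarith
        _ = (2 * B * n ^ 2) * P ^ 2 := by ring
        _ ≤ (C * M ^ 2) * P ^ 2 := by gcongr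
        _ = _ := by ring
    exact le_of_sq_le_sq (le_of_mul_le_mul_left h3 hC) (by positivity)
  have hlin : (∑ k, b' k * x k) - (∑ k, b k * x k) - ((∑ k, b' k * y k) - ∑ k, b k * y k)
      ≤ ε * P * U := by
    rw [hU, Finset.mul_sum]
    simp only [← Finset.sum_sub_distrib]
    refine Finset.sum_le_sum fun k _ => ?_
    calc b' k * x k - b k * x k - (b' k * y k - b k * y k)
        = (b' k - b k) * (x k - y k) := by ring
      _ ≤ |(b' k - b k) * (x k - y k)| := le_abs_self _
      _ = |b' k - b k| * |x k - y k| := abs_mul _ _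
      _ ≤ (ε * P ^ 2) * |x k - y k| := by gcongr; exact he k
      _ = ε * P * (P * |x k - y k|) := by ring
      _ ≤ ε * P * (q k * |x k - y k|) := by gcongr; exact hq k
  have hquad := quad_perturbation_le hE hx hy
  have hgap := half_quad_sub_le A b x y hmid
  have hUQ := weighted_sq_le (hA fun k => x k - y k) hC.le
  have hQ : ∑ i, ∑ j, (x i - y i) * A i j * (x j - y j)
      ≤ 2 * (ε * (U * (U + 2 * (M + 1) * P))) := by
    have : ε * (U * (X + Y)) ≤ ε * (U * (U + 2 * M * P)) := by
      have hXY : X + Y ≤ U + 2 * M * P := by linarith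
      gcongr
    linarith
  have hUU : U * (C * U) ≤ U * (2 * n ^ 2 * ε * (U + 2 * (M + 1) * P)) := by
    calc U * (C * U) = C * U ^ 2 := by ring
      _ ≤ n ^ 2 * ∑ i, ∑ j, (x i - y i) * A i j * (x j - y j) := hUQ
      _ ≤ n ^ 2 * (2 * (ε * (U * (U + 2 * (M + 1) * P)))) := by gcongr
      _ = _ := by ring
  have hdU : P * |x k - y k| ≤ U :=
    (mul_le_mul_of_nonneg_right (hq k) (abs_nonneg _)).trans
      (Finset.single_le_sum (f := fun k => q k * |x k - y k|)
        (fun k _ => mul_nonneg (hq0 k) (abs_nonneg _)) (Finset.mem_univ k))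
  have hUb : C * U ≤ 8 * n ^ 2 * (M + 1) * ε * P := by
    rcases hU0.eq_or_lt with h | h
    · rw [← h, mul_zero]; positivity
    · have h1 := le_of_mul_le_mul_left hUU h
      -- `4 n² ε ≤ C` lets half of `C U` absorb the term quadratic in `U`
      have h2 : 4 * n ^ 2 * ε * U ≤ C * U := by gcongr
      linarith
  refine le_of_mul_le_mul_left ?_ hP
  calc P * (C * |x k - y k|) = C * (P * |x k - y k|) := by ring
    _ ≤ C * U := by gcongr
    _ ≤ _ := hUb
    _ = _ := by ring

/-- Under (G1), (G2), (G3) and the strengthened hypothesis (G4'), the estimated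
shrinkage intensities converge to the optimal ones: `‖λ̂(p) − λ*(p)‖ → 0`. -/
theorem lamhat_converges_to_lamstar (K : ℕ)
    (A : ℕ → Matrix (Fin K) (Fin K) ℝ) (b : ℕ → Fin K → ℝ) (c : ℕ → ℝ)
    (hApsd : ∀ p, (A p).PosSemidef)
    (hc : ∀ p, 0 ≤ c p)
    (Ahat : ℕ → Matrix (Fin K) (Fin K) ℝ) (bhat : ℕ → Fin K → ℝ)
    (hAhatsymm : ∀ p, (Ahat p).IsSymm)
    (Δ : ℕ → (Fin K → ℝ) → ℝ)
    (hΔ : ∀ p (lam : Fin K → ℝ), Δ p lam =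
      (∑ k, ∑ l, lam k * A p k l * lam l) - 2 * (∑ k, b p k * lam k) + c p)
    (Δhat : ℕ → (Fin K → ℝ) → ℝ)
    (hΔhat : ∀ p (lam : Fin K → ℝ), Δhat p lam =
      (∑ k, ∑ l, lam k * Ahat p k l * lam l) - 2 * (∑ k, bhat p k * lam k) + c p)
    (S : Set (Fin K → ℝ))
    (hS : S = {lam | (∀ k, 0 ≤ lam k) ∧ (∑ k, lam k) ≤ 1})
    (lamstar : ℕ → Fin K → ℝ)
    (hlamstar : ∀ p, lamstar p ∈ S ∧ IsMinOn (Δ p) S (lamstar p))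
    (lamhat : ℕ → Fin K → ℝ)
    (hlamhat : ∀ p, lamhat p ∈ S ∧ IsMinOn (Δhat p) S (lamhat p))
    (τ : ℝ) (τA : Fin K → ℝ) (hτA : ∀ k, τ ≤ τA k)
    (hG1 : ∃ c₀ C₀ : ℝ, 0 < c₀ ∧ c₀ ≤ C₀ ∧
      ∀ᶠ p : ℕ in atTop, c₀ * (p : ℝ) ^ τ ≤ c p ∧ c p ≤ C₀ * (p : ℝ) ^ τ)
    (hG2 : ∀ k, (fun p : ℕ => b p k) =O[atTop] fun p : ℕ => (p : ℝ) ^ τ)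
    (hG3A : ∀ k l, (fun p : ℕ => Ahat p k l - A p k l)
      =o[atTop] fun p : ℕ => (p : ℝ) ^ ((τA k + τA l) / 2))
    (hG3b : ∀ k, (fun p : ℕ => bhat p k - b p k) =o[atTop] fun p : ℕ => (p : ℝ) ^ τ)
    (m : ℕ → Fin K → ℝ)
    (hm : ∀ p k, m p k = sInf {x : ℝ | ∃ α : Fin K → ℝ,
      α k = 1 ∧ x = ∑ i, ∑ j, α i * A p i j * α j})
    (hG4 : ∀ k, ∃ ck Ck : ℝ, 0 < ck ∧ ck ≤ Ck ∧
      ∀ᶠ p : ℕ in atTop, ck * (p : ℝ) ^ τA k ≤ m p k ∧ m p k ≤ Ck * (p : ℝ) ^ τA k) :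
    Tendsto (fun p : ℕ => Real.sqrt (∑ k, (lamhat p k - lamstar p k) ^ 2)) atTop (nhds 0) := by
  subst hS
  obtain ⟨C, hCc, hC⟩ : ∃ C : ℝ, (∀ k, ∀ᶠ p : ℕ in atTop, C * (p : ℝ) ^ τA k ≤ m p k) ∧ 0 < C := by
    have h : ∀ k, ∀ᶠ C : ℝ in nhdsWithin 0 (Set.Ioi 0),
        ∀ᶠ p : ℕ in atTop, C * (p : ℝ) ^ τA k ≤ m p k := by
      intro k
      obtain ⟨ck, _, hck, _, hev⟩ := hG4 k
      filter_upwards [mem_nhdsWithin_of_mem_nhds (Iic_mem_nhds hck)] with C hCk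
      filter_upwards [hev] with p hp
      exact (mul_le_mul_of_nonneg_right hCk (by positivity)).trans hp.1
    exact ((eventually_all.2 h).and self_mem_nhdsWithin).exists
  obtain ⟨B, hBb, hB⟩ : ∃ B : ℝ, (∀ k, ∀ᶠ p : ℕ in atTop, |b p k| ≤ B * (p : ℝ) ^ τ) ∧ 0 ≤ B := by
    have h : ∀ k, ∀ᶠ B : ℝ in atTop, ∀ᶠ p : ℕ in atTop, |b p k| ≤ B * (p : ℝ) ^ τ := by
      intro k
      obtain ⟨Bk, hBk⟩ := (hG2 k).bound
      filter_upwards [eventually_ge_atTop Bk] with B hB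
      filter_upwards [hBk] with p hp
      rw [Real.norm_eq_abs, Real.norm_of_nonneg (by positivity)] at hp
      exact hp.trans (mul_le_mul_of_nonneg_right hB (by positivity))
    exact ((eventually_all.2 h).and (eventually_ge_atTop 0)).exists
  set n : ℝ := (Fintype.card (Fin K) : ℝ) with hn
  -- `M` is the constant in the bound `∑ k, q k λ*_k ≤ M P`
  set M : ℝ := Real.sqrt (2 * B * n ^ 2 / C) with hM
  have hM0 : 0 ≤ M := Real.sqrt_nonneg _
  have hBM : 2 * B * n ^ 2 ≤ C * M ^ 2 := by
    rw [hM, Real.sq_sqrt (by positivity), mul_div_cancel₀ _ hC.ne']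
  have key : ∀ ε : ℝ, 0 < ε → 4 * n ^ 2 * ε ≤ C → ∀ᶠ p : ℕ in atTop, ∀ k,
      C * |lamhat p k - lamstar p k| ≤ 8 * n ^ 2 * (M + 1) * ε := by
    intro ε hε hεC
    have hE := eventually_all.2 fun k => eventually_all.2 fun l => (hG3A k l).bound hε
    have he := eventually_all.2 fun k => (hG3b k).bound hε
    filter_upwards [eventually_ge_atTop 1, eventually_all.2 hCc, eventually_all.2 hBb, hE, he]
      with p hp hCp hBp hEp hep
    have hp1 : (1 : ℝ) ≤ p := by exact_mod_cast hp
    have hp0 : (0 : ℝ) < p := by linarith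
    have hsq : ∀ t : ℝ, ((p : ℝ) ^ (t / 2)) ^ 2 = (p : ℝ) ^ t := fun t => by
      rw [← Real.rpow_mul_natCast hp0.le]; congr 1; push_cast; ring
    obtain ⟨⟨hs0, hs1⟩, hsmin⟩ := hlamstar p
    obtain ⟨⟨hh0, hh1⟩, hhmin⟩ := hlamhat p
    have c0 := isMinOn_iff.1 hsmin (fun _ => 0) ⟨fun _ => le_rfl, by simp⟩
    have cmid := isMinOn_iff.1 hsmin (fun k => (lamhat p k + lamstar p k) / 2)
      ⟨fun k => by linarith [hs0 k, hh0 k], by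
        rw [← Finset.sum_div, Finset.sum_add_distrib]; linarith⟩
    have chat := isMinOn_iff.1 hhmin (lamstar p) ⟨hs0, hs1⟩
    rw [hΔ, hΔ] at c0 cmid
    rw [hΔhat, hΔhat] at chat
    intro k
    refine abs_sub_le_of_perturbation (A := A p) (A' := Ahat p) (b := b p) (b' := bhat p)
      (q := fun k => (p : ℝ) ^ (τA k / 2)) (P := (p : ℝ) ^ (τ / 2)) (B := B) hC hB hM0
      (by positivity) hε.le hBM hεC ?_ ?_ ?_ ?_ ?_ hh0 hs0 hs1 ?_ ?_ ?_ k
    · exact fun k => Real.rpow_le_rpow_of_exponent_le hp1 (by linarith [hτA k])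
    · intro α k
      have h := sInf_mul_sq_le_quad (hApsd p) k α
      rw [← hm] at h
      refine le_trans ?_ h
      rw [mul_pow, hsq, ← mul_assoc]
      exact mul_le_mul_of_nonneg_right (hCp k) (sq_nonneg _)
    · intro k
      rw [hsq]; exact hBp k
    · intro k l
      have h := hEp k l
      rwa [Real.norm_eq_abs, Real.norm_of_nonneg (by positivity), add_div,
        Real.rpow_add hp0] at h
    · intro k
      have h := hep k
      rwa [Real.norm_eq_abs, Real.norm_of_nonneg (by positivity), ← hsq τ] at h
    · simp only [zero_mul, mul_zero, Finset.sum_const_zero] at c0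
      linarith
    · linarith
    · linarith
  have hk : ∀ k, Tendsto (fun p : ℕ => lamhat p k - lamstar p k) atTop (nhds 0) := by
    intro k
    rw [Metric.tendsto_nhds]
    intro η hη
    set L : ℝ := 8 * n ^ 2 * (M + 1) with hL
    have hL0 : 0 ≤ L := by positivity
    obtain ⟨⟨ε, h1, h2⟩, hε⟩ : ∃ ε : {ε : ℝ // 4 * n ^ 2 * ε ≤ C ∧ L * ε < C * η}, 0 < ε.1 := by
      have t1 : ∀ᶠ ε : ℝ in nhdsWithin 0 (Set.Ioi 0), 4 * n ^ 2 * ε < C :=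
        ((continuous_const.mul continuous_id).tendsto' 0 0 (by simp)).eventually_lt_const hC
          |>.filter_mono nhdsWithin_le_nhds
      have t2 : ∀ᶠ ε : ℝ in nhdsWithin 0 (Set.Ioi 0), L * ε < C * η :=
        ((continuous_const.mul continuous_id).tendsto' 0 0 (by simp)).eventually_lt_const
          (by positivity) |>.filter_mono nhdsWithin_le_nhds
      obtain ⟨ε, ⟨h1, h2⟩, h3⟩ := ((t1.and t2).and self_mem_nhdsWithin).exists
      exact ⟨⟨ε, h1.le, h2⟩, h3⟩
    filter_upwards [key ε hε h1] with p hp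
    rw [Real.dist_eq, sub_zero]
    exact lt_of_mul_lt_mul_left ((hp k).trans_lt h2) hC.le
  have hsum : Tendsto (fun p : ℕ => ∑ k, (lamhat p k - lamstar p k) ^ 2) atTop
      (nhds (∑ _k : Fin K, (0 : ℝ) ^ 2)) := tendsto_finsetSum _ fun k _ => (hk k).pow 2
  simpa using hsum.sqrt
end
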